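/- If a residuated lattice A satisfies a\a = e for all a ∈ A, or satisfies a/a = e for all a ∈ A, then A satisfies both a\a = e and a/a = e for all a (i.e., A is integrally closed) and moreover a\e = e/a for all a ∈ A (i.e., A is e-cyclic). -/

import Mathlib

/-- A residuated lattice: a lattice-ordered monoid with left and right residuals,
i.e. `b ≤ a\c ↔ a*b ≤ c ↔ a ≤ c/b`.  `ldiv a c` denotes `a\c` and `rdiv c b` denotes `c/b`. -/
class ResiduatedLattice (α : Type*) extends Lattice α, Monoid α where
  ldiv : α → α → α
  rdiv : α → α → α
  le_ldiv_iff : ∀ a b c : α, b ≤ ldiv a c ↔ a * b ≤ c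
  le_rdiv_iff : ∀ a b c : α, a ≤ rdiv c b ↔ a * b ≤ c

open ResiduatedLattice

/-!
If `a \ a = 1` for all `a`, apply this to `u = a / a`: since `u * u ≤ u`, it gives
`u ≤ u \ u = 1`, so `a / a = 1` as well; the converse is the same argument in the opposite monoid.
Moreover, `a * (a \ 1) ≤ 1` gives `a * ((a \ 1) * a) ≤ a`, hence `(a \ 1) * a ≤ a \ a = 1`,
that is, `a \ 1 ≤ 1 / a`; the reverse inequality is dual.
-/

/-- A residuated partially ordered monoid: the common setting of residuated lattices and their
analogues without joins and meets. As for `ResiduatedLattice`, `ldiv a c` is `a\c` and `rdiv c b`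
is `c/b`. -/
class ResiduatedPomonoid (α : Type*) extends PartialOrder α, Monoid α where
  ldiv : α → α → α
  rdiv : α → α → α
  le_ldiv_iff {a b c : α} : b ≤ ldiv a c ↔ a * b ≤ c
  le_rdiv_iff {a b c : α} : a ≤ rdiv c b ↔ a * b ≤ c

/-- The underlying residuated partially ordered monoid. It is not an instance, as that would give
`1` and `*` on a residuated lattice a second path through this class. -/
abbrev ResiduatedLattice.toResiduatedPomonoid {α : Type*} [ResiduatedLattice α] :
    ResiduatedPomonoid α where
  ldiv := ldiv
  rdiv := rdiv
  le_ldiv_iff := le_ldiv_iff _ _ _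
  le_rdiv_iff := le_rdiv_iff _ _ _

namespace ResiduatedPomonoid

open MulOpposite

variable {α : Type*} [ResiduatedPomonoid α] {a b : α}

instance : ResiduatedPomonoid αᵐᵒᵖ where
  ldiv x z := op (rdiv (unop z) (unop x))
  rdiv z y := op (ldiv (unop y) (unop z))
  le_ldiv_iff := le_rdiv_iff (α := α)
  le_rdiv_iff := le_ldiv_iff (α := α)

theorem mul_ldiv_le : a * ldiv a b ≤ b :=
  le_ldiv_iff.1 le_rfl

theorem rdiv_mul_le : rdiv b a * a ≤ b :=
  le_rdiv_iff.1 le_rfl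

instance : MulLeftMono α where
  elim _ _ _ hbc := le_ldiv_iff.1 (hbc.trans (le_ldiv_iff.2 le_rfl))

instance : MulRightMono α where
  elim _ _ _ hbc := le_rdiv_iff.1 (hbc.trans (le_rdiv_iff.2 le_rfl))

theorem one_le_rdiv_self : 1 ≤ rdiv a a :=
  le_rdiv_iff.2 (one_mul a).le

theorem rdiv_self_mul_rdiv_self_le : rdiv a a * rdiv a a ≤ rdiv a a :=
  le_rdiv_iff.2 <| calc
    rdiv a a * rdiv a a * a = rdiv a a * (rdiv a a * a) := mul_assoc _ _ _
    _ ≤ rdiv a a * a := by gcongr; exact rdiv_mul_le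
    _ ≤ a := rdiv_mul_le

theorem rdiv_self_eq_one_of_ldiv_self (h : ldiv (rdiv a a) (rdiv a a) = 1) : rdiv a a = 1 :=
  le_antisymm ((le_ldiv_iff.2 rdiv_self_mul_rdiv_self_le).trans_eq h) one_le_rdiv_self

theorem ldiv_self_eq_one_of_rdiv_self (h : rdiv (ldiv a a) (ldiv a a) = 1) : ldiv a a = 1 :=
  op_injective (rdiv_self_eq_one_of_ldiv_self (a := op a) (congrArg op h))

theorem ldiv_one_le_rdiv_one_of_ldiv_self (h : ldiv a a = 1) : ldiv a 1 ≤ rdiv 1 a := by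
  have mul_le_self : a * (ldiv a 1 * a) ≤ a := calc
    a * (ldiv a 1 * a) = a * ldiv a 1 * a := (mul_assoc _ _ _).symm
    _ ≤ 1 * a := by gcongr; exact mul_ldiv_le
    _ = a := one_mul a
  exact le_rdiv_iff.2 ((le_ldiv_iff.2 mul_le_self).trans_eq h)

theorem rdiv_one_le_ldiv_one_of_rdiv_self (h : rdiv a a = 1) : rdiv 1 a ≤ ldiv a 1 :=
  ldiv_one_le_rdiv_one_of_ldiv_self (a := op a) (congrArg op h)

end ResiduatedPomonoid

open ResiduatedPomonoid in
theorem integrally_closed_and_ecyclic_of_half_general {α : Type*} [ResiduatedPomonoid α]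
    (h : (∀ a : α, ldiv a a = 1) ∨ (∀ a : α, rdiv a a = 1)) :
    (∀ a : α, ldiv a a = 1 ∧ rdiv a a = 1) ∧ (∀ a : α, ldiv a 1 = rdiv 1 a) := by
  have ldiv_self (a : α) : ldiv a a = 1 :=
    h.elim (· a) fun h => ldiv_self_eq_one_of_rdiv_self (h _)
  have rdiv_self (a : α) : rdiv a a = 1 :=
    h.elim (fun h => rdiv_self_eq_one_of_ldiv_self (h _)) (· a)
  refine ⟨fun a => ⟨ldiv_self a, rdiv_self a⟩, fun a => le_antisymm ?_ ?_⟩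
  · exact ldiv_one_le_rdiv_one_of_ldiv_self (ldiv_self a)
  · exact rdiv_one_le_ldiv_one_of_rdiv_self (rdiv_self a)

/-- A residuated lattice satisfying either `x\x ≈ e` or `x/x ≈ e` is integrally
closed and e-cyclic. -/
theorem integrally_closed_and_ecyclic_of_half {α : Type*} [ResiduatedLattice α]
    (h : (∀ a : α, ldiv a a = 1) ∨ (∀ a : α, rdiv a a = 1)) :
    (∀ a : α, ldiv a a = 1 ∧ rdiv a a = 1) ∧ (∀ a : α, ldiv a 1 = rdiv 1 a) :=
  let _ : ResiduatedPomonoid α := toResiduatedPomonoid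
  integrally_closed_and_ecyclic_of_half_general h
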